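/- Let m ≥ 0, n ≥ 1, and let a = (a_1,…,a_n), b = (b_1,…,b_n) be tuples of nonnegative integers. With g_m(a,b;v) := ∑_{k=0}^{m} v^k (v;t)_{m-k} C(m,k)_t ∏_{i=1}^{n} C(k+a_i, b_i)_t ∈ ℤ[v,t], the following recurrence holds: g_m((a_1,…,a_n),(b_1,…,b_n);v) = ∑_{s} t^{s(a_1-b_1+s)} · C(a_1, b_1-s)_t · C(m,s)_t · v^s · g_{m-s}((a_2+s,…,a_n+s),(b_2,…,b_n);v), where s ranges over integers with max(0, b_1-a_1) ≤ s ≤ min(m, b_1), and for n = 1 the factor g_{m-s} of the empty tuples equals 1. -/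

import Mathlib

/-!
The recurrence comes from expanding the factor with index `1` in each summand of `g_m`.

* The `t`-Vandermonde identity (`gaussNat_add`) gives
  `C(k+a₁,b₁) = ∑ₛ t^{s(a₁-b₁+s)} C(k,s) C(a₁,b₁-s)`.
* Trinomial revision (`gaussNat_mul_gaussNat`) gives `C(m,k) C(k,s) = C(m,s) C(m-s,k-s)`, so after
  exchanging the sums the factor `C(m,s)` no longer depends on `k`.

Writing `k = s + j`, the inner sum over `j` is `v^s g_{m-s}` with every remaining `aᵢ` raised by
`s`. The Pochhammer factor only sees `m - k = (m - s) - j`, so it is unaffected.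
Trinomial revision is read off from the product formula `gaussNat_mul_pochh`, since `ℤ[t]` is a
domain and `(t;t)_n ≠ 0`.
-/

open Finset

noncomputable section

attribute [local instance] Classical.propDecidable

/-- The Gaussian binomial coefficient `C(a,b)_t` for natural arguments,
as a polynomial in `t` (it vanishes when `b > a`). -/
def gaussNat : ℕ → ℕ → Polynomial ℤ
  | _, 0 => 1
  | 0, _ + 1 => 0
  | a + 1, b + 1 => gaussNat a b + Polynomial.X ^ (b + 1) * gaussNat a (b + 1)

/-- The Gaussian binomial coefficient `C(a,b)_t ∈ ℤ[t]`, set to `0` unless `a ≥ b ≥ 0`. -/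
def gaussInt (a b : ℤ) : Polynomial ℤ :=
  if 0 ≤ b ∧ b ≤ a then gaussNat a.toNat b.toNat else 0

/-- The t-Pochhammer symbol `(w;t)_k = ∏_{i=0}^{k-1} (1 - w tⁱ)`. -/
def pochh {R : Type*} [CommRing R] (w t : R) (k : ℕ) : R :=
  ∏ i ∈ Finset.range k, (1 - w * t ^ i)

/-- `g_m(a,b;v)` as an element of `(ℤ[t])[v]` (outer variable `v`, inner variable `t`). -/
def gPoly (m n : ℕ) (a b : ℕ → ℕ) : Polynomial (Polynomial ℤ) :=
  ∑ k ∈ Finset.range (m + 1),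
    Polynomial.X ^ k *
      pochh (R := Polynomial (Polynomial ℤ)) Polynomial.X (Polynomial.C Polynomial.X) (m - k) *
      Polynomial.C (gaussInt m k) *
      ∏ i ∈ Finset.Icc 1 n, Polynomial.C (gaussInt ((k : ℤ) + a i) (b i))

theorem gaussNat_zero_right (a : ℕ) : gaussNat a 0 = 1 := by
  cases a <;> rfl

theorem gaussNat_eq_zero {a b : ℕ} (h : a < b) : gaussNat a b = 0 := by
  induction a generalizing b with
  | zero =>
    obtain ⟨c, rfl⟩ : ∃ c, b = c + 1 := ⟨b - 1, by omega⟩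
    rfl
  | succ a ih =>
    obtain ⟨c, rfl⟩ : ∃ c, b = c + 1 := ⟨b - 1, by omega⟩
    rw [gaussNat, ih (by omega), ih (by omega)]
    simp

theorem gaussNat_self (a : ℕ) : gaussNat a a = 1 := by
  induction a with
  | zero => rfl
  | succ a ih => rw [gaussNat, ih, gaussNat_eq_zero (Nat.lt_succ_self a)]; simp

theorem gaussInt_natCast (a b : ℕ) : gaussInt a b = gaussNat a b := by
  unfold gaussInt
  split_ifs with h
  · simp
  · rw [gaussNat_eq_zero (by omega)]

theorem pochh_succ (n : ℕ) :
    pochh (Polynomial.X : Polynomial ℤ) Polynomial.X (n + 1) =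
      pochh Polynomial.X Polynomial.X n * (1 - Polynomial.X ^ (n + 1)) := by
  rw [pochh, Finset.prod_range_succ, pow_succ']
  rfl

theorem pochh_ne_zero (n : ℕ) :
    pochh (Polynomial.X : Polynomial ℤ) Polynomial.X n ≠ 0 := by
  refine Finset.prod_ne_zero_iff.2 fun i _ h => ?_
  -- the factor `1 - t·tⁱ` takes the value `1` at `t = 0`
  simpa using congrArg (Polynomial.eval 0) h

/-- The product formula `C(i+j,i)_t = (t;t)_{i+j} / ((t;t)_i (t;t)_j)`, with denominators
cleared. -/
theorem gaussNat_mul_pochh (i j : ℕ) :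
    gaussNat (i + j) i * pochh Polynomial.X Polynomial.X i * pochh Polynomial.X Polynomial.X j =
      pochh Polynomial.X Polynomial.X (i + j) := by
  induction i generalizing j with
  | zero => simp [gaussNat_zero_right, pochh]
  | succ i ihi =>
    induction j with
    | zero => simp [gaussNat_self, pochh]
    | succ j ihj =>
      have h1 := ihi (j + 1)
      have e1 : i + 1 + (j + 1) = (i + (j + 1)) + 1 := by ring
      have e2 : i + 1 + j = i + (j + 1) := by ring
      rw [e2] at ihj
      rw [e1, gaussNat, pochh_succ (i + (j + 1))]
      rw [pochh_succ j] at h1 ⊢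
      rw [pochh_succ i] at ihj ⊢
      linear_combination (1 - Polynomial.X ^ (i + 1)) * h1
        + Polynomial.X ^ (i + 1) * (1 - Polynomial.X ^ (j + 1)) * ihj

/-- Trinomial revision `C(m,k) C(k,s) = C(m,s) C(m-s,k-s)`, with `k = s + j` and
`m = s + j + l`. -/
theorem gaussNat_mul_gaussNat (s j l : ℕ) :
    gaussNat (s + j + l) (s + j) * gaussNat (s + j) s =
      gaussNat (s + j + l) s * gaussNat (j + l) j := by
  have h1 := gaussNat_mul_pochh (s + j) l
  have h2 := gaussNat_mul_pochh s j
  have h3 := gaussNat_mul_pochh s (j + l)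
  have h4 := gaussNat_mul_pochh j l
  rw [← add_assoc] at h3
  refine mul_right_cancel₀ (mul_ne_zero (mul_ne_zero (pochh_ne_zero s) (pochh_ne_zero j))
    (pochh_ne_zero l)) ?_
  linear_combination
    gaussNat (s + j + l) (s + j) * pochh Polynomial.X Polynomial.X l * h2 + h1 - h3
      - gaussNat (s + j + l) s * pochh Polynomial.X Polynomial.X s * h4

/-- The `t`-Vandermonde identity. The exponent `s * (a + s - b)` uses truncated subtraction, which
is harmless: for `a + s < b` the factor `C(a,b-s)` vanishes. -/
theorem gaussNat_add (k a b : ℕ) :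
    gaussNat (k + a) b = ∑ s ∈ Finset.range (b + 1),
      Polynomial.X ^ (s * (a + s - b)) * gaussNat a (b - s) * gaussNat k s := by
  induction a generalizing b with
  | zero =>
    rw [Finset.sum_range_succ, Finset.sum_eq_zero]
    · simp [gaussNat_zero_right]
    · intro s hs
      rw [gaussNat_eq_zero (a := 0) (by have := Finset.mem_range.1 hs; omega)]
      simp
  | succ a ih =>
    cases b with
    | zero => simp [gaussNat_zero_right]
    | succ b =>
      rw [← add_assoc, gaussNat, ih b, ih (b + 1), Finset.sum_range_succ _ (b + 1),
        Finset.sum_range_succ _ (b + 1), mul_add, Finset.mul_sum, ← add_assoc,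
        ← Finset.sum_add_distrib]
      congr 1
      · refine Finset.sum_congr rfl fun s hs => ?_
        have hs' : s ≤ b := by have := Finset.mem_range.1 hs; omega
        obtain ⟨c, rfl⟩ := Nat.exists_eq_add_of_le hs'
        have e1 : s + c + 1 - s = c + 1 := by omega
        have e2 : s + c - s = c := by omega
        have e3 : a + 1 + s - (s + c + 1) = a - c := by omega
        have e4 : a + s - (s + c) = a - c := by omega
        have e5 : a + s - (s + c + 1) = a - (c + 1) := by omega
        rw [e1, e2, e3, e4, e5, gaussNat]
        rcases Nat.lt_or_ge a (c + 1) with h | h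
        · rw [gaussNat_eq_zero h]; ring
        · obtain ⟨d, rfl⟩ := Nat.exists_eq_add_of_le h
          have e6 : c + 1 + d - c = d + 1 := by omega
          have e7 : c + 1 + d - (c + 1) = d := by omega
          rw [e6, e7]
          ring
      · have e1 : a + (b + 1) - (b + 1) = a := by omega
        have e2 : a + 1 + (b + 1) - (b + 1) = a + 1 := by omega
        rw [e1, e2, Nat.sub_self, gaussNat_zero_right, gaussNat_zero_right]
        ring

/-- `gaussNat_add` with `s` restricted to the range of the recurrence: the terms with `s < b - a`
or `m < s` vanish as long as `k ≤ m`. -/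
theorem gaussNat_add_Icc {m k : ℕ} (hk : k ≤ m) (a b : ℕ) :
    gaussNat (k + a) b = ∑ s ∈ Finset.Icc (b - a) (min m b),
      Polynomial.X ^ (s * (a + s - b)) * gaussNat a (b - s) * gaussNat k s := by
  rw [gaussNat_add]
  symm
  apply Finset.sum_subset
  · intro s hs
    simp only [Finset.mem_Icc, Finset.mem_range] at *
    omega
  · intro s hs hs'
    simp only [Finset.mem_Icc, Finset.mem_range] at *
    rcases Nat.lt_or_ge k s with h | h
    · rw [gaussNat_eq_zero h, mul_zero]
    · rw [gaussNat_eq_zero (a := a) (by omega), mul_zero, zero_mul]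

theorem statement11 (m n : ℕ) (hn : 1 ≤ n) (a b : ℕ → ℕ) :
    gPoly m n a b =
      ∑ s ∈ Finset.Icc (b 1 - a 1) (min m (b 1)),
        Polynomial.C (Polynomial.X ^ (s * (a 1 + s - b 1))) *
          Polynomial.C (gaussInt (a 1) ((b 1 : ℤ) - s)) *
          Polynomial.C (gaussInt m s) *
          Polynomial.X ^ s *
          gPoly (m - s) (n - 1) (fun i => a (i + 1) + s) (fun i => b (i + 1)) := by
  obtain ⟨n, rfl⟩ : ∃ N, n = N + 1 := ⟨n - 1, by omega⟩
  have hprod : ∀ k : ℕ,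
      (∏ i ∈ Finset.Icc 1 (n + 1), Polynomial.C (gaussInt ((k : ℤ) + a i) (b i))) =
        Polynomial.C (gaussNat (k + a 1) (b 1)) *
          ∏ i ∈ Finset.Icc 1 n, Polynomial.C (gaussNat (k + a (i + 1)) (b (i + 1))) := by
    intro k
    simp only [← Nat.cast_add, gaussInt_natCast]
    rw [← Finset.mul_prod_Ioc_eq_prod_Icc (by omega : 1 ≤ n + 1)]
    congr 1
    refine (Finset.prod_bij (fun i _ => i + 1) ?_ ?_ ?_ ?_).symm
    · intro i hi
      simp only [Finset.mem_Icc, Finset.mem_Ioc] at *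
      omega
    · intro i _ j _ h
      omega
    · intro i hi
      simp only [Finset.mem_Ioc] at hi
      exact ⟨i - 1, by simp only [Finset.mem_Icc]; omega, by omega⟩
    · intro i _
      rfl
  have hexp : gPoly m (n + 1) a b = ∑ k ∈ Finset.range (m + 1),
      ∑ s ∈ Finset.Icc (b 1 - a 1) (min m (b 1)),
        Polynomial.C (Polynomial.X ^ (s * (a 1 + s - b 1))) *
          Polynomial.C (gaussNat (a 1) (b 1 - s)) *
          (Polynomial.C (gaussNat m k * gaussNat k s) * Polynomial.X ^ k *
            pochh (R := Polynomial (Polynomial ℤ)) Polynomial.X (Polynomial.C Polynomial.X) (m - k) *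
            ∏ i ∈ Finset.Icc 1 n, Polynomial.C (gaussNat (k + a (i + 1)) (b (i + 1)))) := by
    refine Finset.sum_congr rfl fun k hk => ?_
    rw [hprod, gaussNat_add_Icc (m := m) (by have := Finset.mem_range.1 hk; omega), map_sum,
      Finset.sum_mul, Finset.mul_sum]
    refine Finset.sum_congr rfl fun s _ => ?_
    rw [gaussInt_natCast]
    simp only [map_mul]
    ring
  rw [hexp, Finset.sum_comm]
  refine Finset.sum_congr rfl fun s hs => ?_
  simp only [Finset.mem_Icc, le_min_iff] at hs
  obtain ⟨_, hsm, hsb⟩ := hs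
  rw [← Nat.cast_sub hsb, gaussInt_natCast, gaussInt_natCast, ← Finset.mul_sum]
  obtain ⟨r, rfl⟩ := Nat.exists_eq_add_of_le hsm
  -- the terms with `k < s` vanish because of the factor `C(k,s)`
  rw [add_assoc s r 1, Finset.sum_range_add, Finset.sum_eq_zero (s := Finset.range s), zero_add]
  · rw [mul_assoc _ (Polynomial.C (gaussNat (s + r) s)), mul_assoc _ (_ * _) (gPoly _ _ _ _)]
    refine congrArg (HMul.hMul _) ?_
    rw [Nat.add_sub_cancel_left, Nat.add_sub_cancel, gPoly, Finset.mul_sum]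
    refine Finset.sum_congr rfl fun j hj => ?_
    obtain ⟨l, rfl⟩ : ∃ l, r = j + l :=
      Nat.exists_eq_add_of_le (by have := Finset.mem_range.1 hj; omega)
    have hP : (∏ i ∈ Finset.Icc 1 n,
          Polynomial.C (gaussInt ((j : ℤ) + (a (i + 1) + s : ℕ)) (b (i + 1)))) =
        ∏ i ∈ Finset.Icc 1 n, Polynomial.C (gaussNat (s + j + a (i + 1)) (b (i + 1))) := by
      refine Finset.prod_congr rfl fun i _ => ?_
      rw [← Nat.cast_add, gaussInt_natCast]
      congr 2
      ring
    rw [hP, gaussInt_natCast, ← add_assoc, gaussNat_mul_gaussNat, Nat.add_sub_cancel_left,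
      Nat.add_sub_cancel_left, map_mul, pow_add]
    ring
  · intro k hk
    rw [gaussNat_eq_zero (Finset.mem_range.1 hk)]
    simp
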